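/- arXiv:2103.14510 — 2 statements merged into one kernel-verified Lean document; each statement's English description precedes it below -/
import Mathlib

section
/- Let d ≥ 1, M ≥ 2, let K be a finite nonempty key set with probability weights p : K → ℝ (p k ≥ 0 for all k and Σ_k p k = 1), and let Enc : K → Fin M → ((d+1)×(d+1) complex matrices) be such that every Enc k m is positive semidefinite with trace 1 and (Enc k m)·e_⊥ = 0, and such that for every key k and all messages m ≠ m' one has (Enc k m)·(Enc k m') = 0 (which holds for every perfectly correct scheme). Then for every message m₀ ∈ Fin M there exist a message m₁ ∈ Fin M with m₁ ≠ m₀ and, for each key k, binary POVMs {P k 0, P k 1} and {Q k 0, Q k 1} on ℂ^{d+1} (all four matrices positive semidefinite, with P k 0 + P k 1 = 1 and Q k 0 + Q k 1 = 1) such that (1/2)·Σ_{k∈K} p k · ( Re tr((P k 0 ⊗ Q k 0) · V (Enc k m₀) V†) + Re tr((P k 1 ⊗ Q k 1) · V (Enc k m₁) V†) ) ≥ 1/2 + (max_{m ∈ Fin M} Σ_{k∈K} p k · λ_max(Enc k m))/16. (That is, there is a cloning-indistinguishability attack, using the cloning channel V, whose success probability is at least 1/2 + μ/16 where μ is the maximum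 over messages of the key-averaged largest eigenvalue of the ciphertext.) -/
open Matrix Kronecker
open scoped ComplexOrder

/-- The last standard basis vector `e_⊥ = e_d` of `ℂ^{d+1}`. -/
noncomputable def perp (d : ℕ) : Fin (d + 1) → ℂ :=
  fun i => if i = Fin.last d then 1 else 0

/-- The cloning map `V : ℂ^{d+1} → ℂ^{d+1} ⊗ ℂ^{d+1}`,
`V_{(i,j),k} = (1/√2)(δ_{i,d} δ_{j,k} + δ_{i,k} δ_{j,d})`. -/
noncomputable def cloneV (d : ℕ) : Matrix (Fin (d + 1) × Fin (d + 1)) (Fin (d + 1)) ℂ :=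
  fun p k => ((1 / Real.sqrt 2 : ℝ) : ℂ) *
    ((if p.1 = Fin.last d then 1 else 0) * (if p.2 = k then 1 else 0) +
     (if p.1 = k then 1 else 0) * (if p.2 = Fin.last d then 1 else 0))

/-!
Fix a unit vector `e` killed by the Hermitian matrices `ρ` and `σ`, where `ρ * σ = 0` and both have
trace one, and let `φ` be a unit eigenvector for the largest eigenvalue `μ` of `ρ`. Both receivers
measure the projection `P` obtained from the support projection of `ρ` by tilting `φ` to
`a e + b φ`, where `a² + b² = 1`. For a projection `P`,
`V† (P ⊗ P) V = ⟨e, P e⟩ P + P e e† P`.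
Here `⟨e, P e⟩ = a²`, and the tilt costs `a² μ` in `tr (P ρ)`, whereas `P e = a (a e + b φ)`
overlaps `φ`. Both outcomes are `P` on `ρ` with probability `a² (1 - a² μ) + a² b² μ`, and both are
`1 - P` on `σ` with probability `1 - a²`, since `P * σ = 0`. The sum is `1 + a² (1 - 2 a²) μ`, which
is largest at `a² = 1 / 4`. As only the pair `{ρ, σ}` matters, the message with the largest averaged
`μ` can always be taken to be one of the two messages.
-/

namespace CloningAttack

section RankOne

variable {n R : Type*} [Fintype n] [CommSemiring R]

lemma trace_vecMulVec_mul (u w : n → R) (A : Matrix n n R) :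
    trace (vecMulVec u w * A) = w ⬝ᵥ A *ᵥ u := by
  rw [vecMulVec_mul, trace_vecMulVec, dotProduct_comm, dotProduct_mulVec]

variable [StarRing R]

lemma star_dotProduct_eq_zero_symm {v w : n → R} (h : star v ⬝ᵥ w = 0) : star w ⬝ᵥ v = 0 := by
  rw [star_dotProduct, h, star_zero]

lemma isStarProjection_vecMulVec_star {v : n → R} (hv : star v ⬝ᵥ v = 1) :
    IsStarProjection (vecMulVec v (star v)) where
  isIdempotentElem := by
    rw [IsIdempotentElem, vecMulVec_mul_vecMulVec, hv, one_smul]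
  isSelfAdjoint := by
    rw [IsSelfAdjoint, star_eq_conjTranspose, conjTranspose_vecMulVec, star_star]

lemma vecMulVec_star_mulVec (v w : n → R) :
    vecMulVec v (star v) *ᵥ w = (star v ⬝ᵥ w) • v := by
  rw [vecMulVec_mulVec, op_smul_eq_smul]

lemma star_mulVec_dotProduct {A : Matrix n n R} (hA : A.IsHermitian) (v w : n → R) :
    star (A *ᵥ v) ⬝ᵥ w = star v ⬝ᵥ A *ᵥ w := by
  rw [star_mulVec, hA.eq, dotProduct_mulVec]

lemma mul_eq_zero_symm {A B : Matrix n n R} (hA : A.IsHermitian) (hB : B.IsHermitian)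
    (h : A * B = 0) : B * A = 0 := by
  simpa [hA.eq, hB.eq] using congrArg conjTranspose h

lemma vecMulVec_star_mul_eq_zero {A : Matrix n n R} (hA : A.IsHermitian) {v : n → R}
    (h : A *ᵥ v = 0) : vecMulVec v (star v) * A = 0 := by
  rw [vecMulVec_mul, ← hA.eq, ← star_mulVec, h, star_zero, vecMulVec_zero]

end RankOne

section SupportProjection

variable {n 𝕜 : Type*} [Fintype n] [DecidableEq n] [RCLike 𝕜]

/-- The support projection of a Hermitian matrix, that is, the orthogonal projection onto its
range; it is the untilted measurement of the attack. Since `0⁻¹ = 0`, the function `x ↦ x⁻¹ * x` is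
the indicator of `x ≠ 0`. -/
noncomputable def supportProj (A : Matrix n n 𝕜) : Matrix n n 𝕜 :=
  cfc (fun x : ℝ => x⁻¹ * x) A

lemma continuousOn_real_spectrum (A : Matrix n n 𝕜) (f : ℝ → ℝ) :
    ContinuousOn f (spectrum ℝ A) :=
  A.finite_real_spectrum.continuousOn f

lemma isStarProjection_supportProj (A : Matrix n n 𝕜) : IsStarProjection (supportProj A) where
  isIdempotentElem := by
    rw [IsIdempotentElem, supportProj, ← cfc_mul _ _ A (continuousOn_real_spectrum A _)
      (continuousOn_real_spectrum A _)]
    exact congrArg (cfc · A) (funext fun x => by rw [mul_assoc, ← mul_assoc x, mul_inv_mul_cancel])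
  isSelfAdjoint := cfc_predicate _ A

lemma supportProj_mul_self {A : Matrix n n 𝕜} (hA : A.IsHermitian) : supportProj A * A = A := by
  have hA' : IsSelfAdjoint A := hA
  calc supportProj A * A = cfc (fun x : ℝ => x⁻¹ * x * x) A := by
        rw [cfc_mul _ _ A (continuousOn_real_spectrum A _), cfc_id' ℝ A, supportProj]
    _ = A := by simp only [inv_mul_mul_self, cfc_id' ℝ A]

lemma supportProj_eq_mul {A : Matrix n n 𝕜} (hA : A.IsHermitian) :
    supportProj A = cfc (fun x : ℝ => x⁻¹) A * A := by
  have hA' : IsSelfAdjoint A := hA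
  rw [supportProj, cfc_mul _ _ A (continuousOn_real_spectrum A _), cfc_id' ℝ A]

lemma supportProj_mul_eq_zero {A B : Matrix n n 𝕜} (hA : A.IsHermitian) (h : A * B = 0) :
    supportProj A * B = 0 := by
  rw [supportProj_eq_mul hA, Matrix.mul_assoc, h, Matrix.mul_zero]

lemma supportProj_mulVec_eq_zero {A : Matrix n n 𝕜} (hA : A.IsHermitian) {v : n → 𝕜}
    (h : A *ᵥ v = 0) : supportProj A *ᵥ v = 0 := by
  rw [supportProj_eq_mul hA, ← mulVec_mulVec, h, mulVec_zero]

lemma supportProj_mulVec_eigenvector {A : Matrix n n 𝕜} (hA : A.IsHermitian) {v : n → 𝕜}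
    {c : 𝕜} (hc : c ≠ 0) (h : A *ᵥ v = c • v) : supportProj A *ᵥ v = v := by
  have hv : v = A *ᵥ (c⁻¹ • v) := by rw [mulVec_smul, h, inv_smul_smul₀ hc]
  rw [hv, mulVec_mulVec, supportProj_mul_self hA]

lemma iSup_eigenvalues_pos {A : Matrix n n 𝕜} (hA : A.IsHermitian)
    (h : 0 < RCLike.re A.trace) : 0 < ⨆ i, hA.eigenvalues i := by
  have hsum : 0 < ∑ i, hA.eigenvalues i := by
    simpa [hA.trace_eq_sum_eigenvalues] using h
  obtain ⟨i, -, hi⟩ : ∃ i ∈ Finset.univ, 0 < hA.eigenvalues i :=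
    Finset.exists_lt_of_sum_lt (by simpa using hsum)
  exact hi.trans_le (le_ciSup (Set.finite_range _).bddAbove i)

lemma exists_unit_eigenvector_iSup_eigenvalues [Nonempty n] {A : Matrix n n 𝕜}
    (hA : A.IsHermitian) :
    ∃ v : n → 𝕜, star v ⬝ᵥ v = 1 ∧ A *ᵥ v = ((⨆ i, hA.eigenvalues i : ℝ) : 𝕜) • v := by
  obtain ⟨i, hi⟩ := exists_eq_ciSup_of_finite (f := hA.eigenvalues)
  refine ⟨hA.eigenvectorBasis i, ?_, ?_⟩
  · rw [dotProduct_comm, ← EuclideanSpace.inner_eq_star_dotProduct]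
    simp [inner_self_eq_norm_sq_to_K]
  · rw [← hi, hA.mulVec_eigenvectorBasis]
    ext j
    simp [RCLike.real_smul_eq_coe_mul]

end SupportProjection

section KroneckerVec

variable {l l' m m' n n' R : Type*} [CommSemiring R]

/-- The matrix of `φ ↦ v ⊗ A φ`, one of the two terms of the cloning map. -/
def vecKron (v : l → R) (A : Matrix m n R) : Matrix (l × m) n R :=
  of fun x k => v x.1 * A x.2 k

/-- The matrix of `φ ↦ A φ ⊗ v`, the other term of the cloning map. -/
def kronVec (A : Matrix l n R) (v : m → R) : Matrix (l × m) n R :=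
  of fun x k => A x.1 k * v x.2

variable [Fintype l] [Fintype m]

lemma kronecker_mul_vecKron (P : Matrix l' l R) (Q : Matrix m' m R) (v : l → R)
    (A : Matrix m n R) : (P ⊗ₖ Q) * vecKron v A = vecKron (P *ᵥ v) (Q * A) := by
  ext x k
  simp only [vecKron, mul_apply, mulVec, dotProduct, of_apply, kroneckerMap_apply,
    Fintype.sum_prod_type, Finset.sum_mul_sum, mul_mul_mul_comm]

lemma kronecker_mul_kronVec (P : Matrix l' l R) (Q : Matrix m' m R) (A : Matrix l n R)
    (v : m → R) : (P ⊗ₖ Q) * kronVec A v = kronVec (P * A) (Q *ᵥ v) := by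
  ext x k
  simp only [kronVec, mul_apply, mulVec, dotProduct, of_apply, kroneckerMap_apply,
    Fintype.sum_prod_type, Finset.sum_mul_sum, mul_mul_mul_comm]

variable [StarRing R]

lemma conjTranspose_vecKron_mul_vecKron (v w : l → R) (A : Matrix m n R) (B : Matrix m n' R) :
    (vecKron v A)ᴴ * vecKron w B = (star v ⬝ᵥ w) • (Aᴴ * B) := by
  ext i j
  simp only [vecKron, mul_apply, dotProduct, of_apply, conjTranspose_apply, star_mul',
    Fintype.sum_prod_type, Finset.sum_mul_sum, mul_mul_mul_comm, Matrix.smul_apply, smul_eq_mul,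
    Pi.star_apply]

lemma conjTranspose_kronVec_mul_kronVec (A : Matrix l n R) (B : Matrix l n' R) (v w : m → R) :
    (kronVec A v)ᴴ * kronVec B w = (star v ⬝ᵥ w) • (Aᴴ * B) := by
  ext i j
  rw [Matrix.smul_apply, smul_eq_mul, mul_comm]
  simp only [kronVec, mul_apply, dotProduct, of_apply, conjTranspose_apply, star_mul',
    Fintype.sum_prod_type, Finset.sum_mul_sum, mul_mul_mul_comm, Pi.star_apply]

lemma conjTranspose_vecKron_mul_kronVec (v : l → R) (A : Matrix m n R) (B : Matrix l n' R)
    (w : m → R) : (vecKron v A)ᴴ * kronVec B w = vecMulVec (Aᴴ *ᵥ w) (star v ᵥ* B) := by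
  ext i j
  rw [vecMulVec_apply, mul_comm]
  simp only [vecKron, kronVec, mul_apply, mulVec, vecMul, dotProduct, of_apply,
    conjTranspose_apply, star_mul', Fintype.sum_prod_type, Finset.sum_mul_sum, mul_mul_mul_comm,
    Pi.star_apply]

lemma conjTranspose_kronVec_mul_vecKron (A : Matrix l n R) (v : m → R) (w : l → R)
    (B : Matrix m n' R) : (kronVec A v)ᴴ * vecKron w B = vecMulVec (Aᴴ *ᵥ w) (star v ᵥ* B) := by
  ext i j
  rw [vecMulVec_apply]
  simp only [vecKron, kronVec, mul_apply, mulVec, vecMul, dotProduct, of_apply,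
    conjTranspose_apply, star_mul', Fintype.sum_prod_type, Finset.sum_mul_sum, mul_mul_mul_comm,
    Pi.star_apply]

end KroneckerVec

section CloningMap

variable {n : Type*} [Fintype n] [DecidableEq n]

/-- The map `φ ↦ (e ⊗ φ + φ ⊗ e) / √2`, which is the cloning map `cloneV` when `e` is the last
basis vector. -/
noncomputable def cloningMap (e : n → ℂ) : Matrix (n × n) n ℂ :=
  ((1 / √2 : ℝ) : ℂ) • (vecKron e 1 + kronVec 1 e)

lemma cloneV_eq_cloningMap (d : ℕ) : cloneV d = cloningMap (perp d) := rfl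

lemma star_perp_dotProduct_perp (d : ℕ) : star (perp d) ⬝ᵥ perp d = 1 := by
  simp [perp, dotProduct]

lemma conjTranspose_cloningMap_mul_kronecker_mul (e : n → ℂ) (P Q : Matrix n n ℂ) :
    (cloningMap e)ᴴ * ((P ⊗ₖ Q) * cloningMap e) =
      (1 / 2 : ℂ) • ((star e ⬝ᵥ P *ᵥ e) • Q + (star e ⬝ᵥ Q *ᵥ e) • P +
        vecMulVec (Q *ᵥ e) (star e ᵥ* P) + vecMulVec (P *ᵥ e) (star e ᵥ* Q)) := by
  have hc : star ((1 / √2 : ℝ) : ℂ) * ((1 / √2 : ℝ) : ℂ) = 1 / 2 := by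
    simp [← Complex.ofReal_mul, ← mul_inv]
  have hsum : (vecKron e 1 + kronVec 1 e)ᴴ * ((P ⊗ₖ Q) * (vecKron e 1 + kronVec 1 e)) =
      (star e ⬝ᵥ P *ᵥ e) • Q + (star e ⬝ᵥ Q *ᵥ e) • P +
        vecMulVec (Q *ᵥ e) (star e ᵥ* P) + vecMulVec (P *ᵥ e) (star e ᵥ* Q) := by
    simp only [conjTranspose_add, Matrix.add_mul, Matrix.mul_add, kronecker_mul_vecKron,
      kronecker_mul_kronVec, conjTranspose_vecKron_mul_vecKron, conjTranspose_vecKron_mul_kronVec,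
      conjTranspose_kronVec_mul_vecKron, conjTranspose_kronVec_mul_kronVec, conjTranspose_one,
      Matrix.one_mul, Matrix.mul_one, one_mulVec]
    abel
  rw [cloningMap, conjTranspose_smul, Matrix.smul_mul, Matrix.mul_smul (P ⊗ₖ Q), Matrix.mul_smul,
    smul_smul, hsum, hc]

/-- The probability that measuring the two halves of the cloned state `V ρ V†` yields the outcomes
with effects `P` and `Q`. -/
noncomputable def jointProb (e : n → ℂ) (P Q ρ : Matrix n n ℂ) : ℝ :=
  (trace ((P ⊗ₖ Q) * (cloningMap e * ρ * (cloningMap e)ᴴ))).re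

lemma trace_kronecker_mul_cloningMap (e : n → ℂ) (P Q ρ : Matrix n n ℂ) :
    trace ((P ⊗ₖ Q) * (cloningMap e * ρ * (cloningMap e)ᴴ)) =
      (1 / 2 : ℂ) * ((star e ⬝ᵥ P *ᵥ e) * trace (Q * ρ) + (star e ⬝ᵥ Q *ᵥ e) * trace (P * ρ) +
        star e ⬝ᵥ P *ᵥ ρ *ᵥ Q *ᵥ e + star e ⬝ᵥ Q *ᵥ ρ *ᵥ P *ᵥ e) := by
  rw [Matrix.mul_assoc (cloningMap e), ← Matrix.mul_assoc, trace_mul_comm, Matrix.mul_assoc,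
    trace_mul_comm, conjTranspose_cloningMap_mul_kronecker_mul]
  simp only [smul_mul, add_mul, trace_smul, trace_add, smul_eq_mul, trace_vecMulVec_mul,
    ← dotProduct_mulVec]

lemma jointProb_self {e : n → ℂ} {P : Matrix n n ℂ} (hP : P.IsHermitian) (ρ : Matrix n n ℂ) :
    jointProb e P P ρ =
      ((star e ⬝ᵥ P *ᵥ e) * trace (P * ρ) + star (P *ᵥ e) ⬝ᵥ ρ *ᵥ P *ᵥ e).re := by
  rw [jointProb, trace_kronecker_mul_cloningMap, star_mulVec_dotProduct hP]
  ring_nf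

lemma jointProb_one_sub {e : n → ℂ} {P σ : Matrix n n ℂ} (he : star e ⬝ᵥ e = 1)
    (hP : P.IsHermitian) (hσ : σ.IsHermitian) (hσe : σ *ᵥ e = 0) (hPσ : P * σ = 0) :
    jointProb e (1 - P) (1 - P) σ = ((1 - star e ⬝ᵥ P *ᵥ e) * trace σ).re := by
  have hPσ' : (1 - P) * σ = σ := by rw [Matrix.sub_mul, hPσ, Matrix.one_mul, sub_zero]
  have hσPe : σ *ᵥ (1 - P) *ᵥ e = 0 := by
    rw [mulVec_mulVec, Matrix.mul_sub, mul_eq_zero_symm hP hσ hPσ, Matrix.mul_one, sub_zero, hσe]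
  rw [jointProb_self (isHermitian_one.sub hP), hPσ', hσPe, sub_mulVec, one_mulVec, dotProduct_sub,
    he, dotProduct_zero, add_zero]

end CloningMap

section TiltedProjection

variable {n : Type*}

/-- The vector `a e + b φ`, which tilts `φ` towards `e`. -/
def tiltedVec (e φ : n → ℂ) (a b : ℝ) : n → ℂ :=
  (a : ℂ) • e + (b : ℂ) • φ

/-- The projection obtained from a projection `S` whose range contains the unit vector `φ` by
replacing `φ` with `a e + b φ`. Both receivers of the attack measure it. -/
def tiltedProj (S : Matrix n n ℂ) (e φ : n → ℂ) (a b : ℝ) : Matrix n n ℂ :=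
  S - vecMulVec φ (star φ) + vecMulVec (tiltedVec e φ a b) (star (tiltedVec e φ a b))

lemma star_tiltedVec (e φ : n → ℂ) (a b : ℝ) :
    star (tiltedVec e φ a b) = (a : ℂ) • star e + (b : ℂ) • star φ := by
  simp [tiltedVec]

variable [Fintype n] {S ρ σ : Matrix n n ℂ} {e φ : n → ℂ} {a b : ℝ}

lemma star_tiltedVec_dotProduct_left (he : star e ⬝ᵥ e = 1) (hφe : star φ ⬝ᵥ e = 0) :
    star (tiltedVec e φ a b) ⬝ᵥ e = a := by
  simp [star_tiltedVec, he, hφe]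

lemma star_tiltedVec_dotProduct_right (hφ : star φ ⬝ᵥ φ = 1) (heφ : star e ⬝ᵥ φ = 0) :
    star (tiltedVec e φ a b) ⬝ᵥ φ = b := by
  simp [star_tiltedVec, hφ, heφ]

lemma star_tiltedVec_dotProduct_self (he : star e ⬝ᵥ e = 1) (hφ : star φ ⬝ᵥ φ = 1)
    (heφ : star e ⬝ᵥ φ = 0) (hφe : star φ ⬝ᵥ e = 0) (hab : a ^ 2 + b ^ 2 = 1) :
    star (tiltedVec e φ a b) ⬝ᵥ tiltedVec e φ a b = 1 := by
  calc star (tiltedVec e φ a b) ⬝ᵥ tiltedVec e φ a b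
      = star (tiltedVec e φ a b) ⬝ᵥ ((a : ℂ) • e + (b : ℂ) • φ) := rfl
    _ = ((a ^ 2 + b ^ 2 : ℝ) : ℂ) := by
      rw [dotProduct_add, dotProduct_smul, dotProduct_smul, star_tiltedVec_dotProduct_left he hφe,
        star_tiltedVec_dotProduct_right hφ heφ]
      push_cast
      simp only [smul_eq_mul, sq]
    _ = 1 := by rw [hab, Complex.ofReal_one]

lemma mulVec_tiltedVec (A : Matrix n n ℂ) :
    A *ᵥ tiltedVec e φ a b = (a : ℂ) • A *ᵥ e + (b : ℂ) • A *ᵥ φ := by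
  rw [tiltedVec, mulVec_add, mulVec_smul, mulVec_smul]

lemma star_tiltedVec_dotProduct_mulVec (hρ : ρ.IsHermitian) (hρe : ρ *ᵥ e = 0) :
    star (tiltedVec e φ a b) ⬝ᵥ ρ *ᵥ tiltedVec e φ a b = b ^ 2 * (star φ ⬝ᵥ ρ *ᵥ φ) := by
  have heρ : star e ⬝ᵥ ρ *ᵥ φ = 0 := by
    rw [← star_mulVec_dotProduct hρ, hρe, star_zero, zero_dotProduct]
  simp only [mulVec_tiltedVec, hρe, smul_zero, zero_add, star_tiltedVec, dotProduct_smul,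
    add_dotProduct, smul_dotProduct, heρ, smul_eq_mul]
  ring

lemma star_dotProduct_eq_zero_of_mulVec (hS : S.IsHermitian) (hSe : S *ᵥ e = 0)
    (hSφ : S *ᵥ φ = φ) : star e ⬝ᵥ φ = 0 := by
  rw [← hSφ, ← star_mulVec_dotProduct hS, hSe, star_zero, zero_dotProduct]

lemma isStarProjection_tiltedProj (hS : IsStarProjection S) (hSe : S *ᵥ e = 0)
    (hSφ : S *ᵥ φ = φ) (he : star e ⬝ᵥ e = 1) (hφ : star φ ⬝ᵥ φ = 1) (hab : a ^ 2 + b ^ 2 = 1) :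
    IsStarProjection (tiltedProj S e φ a b) := by
  have heφ := star_dotProduct_eq_zero_of_mulVec hS.isSelfAdjoint hSe hSφ
  have hφe := star_dotProduct_eq_zero_symm heφ
  have hF : S * vecMulVec φ (star φ) = vecMulVec φ (star φ) := by rw [mul_vecMulVec, hSφ]
  have hT : IsStarProjection (S - vecMulVec φ (star φ)) :=
    (isStarProjection_vecMulVec_star hφ).sub_of_mul_eq_right hS hF
  refine hT.add (isStarProjection_vecMulVec_star
    (star_tiltedVec_dotProduct_self he hφ heφ hφe hab)) ?_
  rw [mul_vecMulVec, mulVec_tiltedVec, sub_mulVec, sub_mulVec, vecMulVec_star_mulVec,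
    vecMulVec_star_mulVec, hSe, hSφ, hφe, hφ]
  simp

lemma tiltedProj_mulVec_left (hS : S.IsHermitian) (hSe : S *ᵥ e = 0) (hSφ : S *ᵥ φ = φ)
    (he : star e ⬝ᵥ e = 1) :
    tiltedProj S e φ a b *ᵥ e = (a : ℂ) • tiltedVec e φ a b := by
  have hφe := star_dotProduct_eq_zero_symm (star_dotProduct_eq_zero_of_mulVec hS hSe hSφ)
  rw [tiltedProj, add_mulVec, sub_mulVec, vecMulVec_star_mulVec, vecMulVec_star_mulVec, hSe, hφe,
    star_tiltedVec_dotProduct_left he hφe, zero_smul, sub_zero, zero_add]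

lemma star_dotProduct_tiltedProj_mulVec (hS : S.IsHermitian) (hSe : S *ᵥ e = 0)
    (hSφ : S *ᵥ φ = φ) (he : star e ⬝ᵥ e = 1) :
    star e ⬝ᵥ tiltedProj S e φ a b *ᵥ e = a ^ 2 := by
  have heφ := star_dotProduct_eq_zero_of_mulVec hS hSe hSφ
  rw [tiltedProj_mulVec_left hS hSe hSφ he, tiltedVec]
  simp [he, heφ, sq]

lemma trace_tiltedProj_mul (hρ : ρ.IsHermitian) (hρe : ρ *ᵥ e = 0) (hSρ : S * ρ = ρ)
    (hab : a ^ 2 + b ^ 2 = 1) :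
    trace (tiltedProj S e φ a b * ρ) = trace ρ - a ^ 2 * (star φ ⬝ᵥ ρ *ᵥ φ) := by
  have hab' : (a : ℂ) ^ 2 + b ^ 2 = 1 := by exact_mod_cast hab
  rw [tiltedProj, Matrix.add_mul, Matrix.sub_mul, hSρ, trace_add, trace_sub, trace_vecMulVec_mul,
    trace_vecMulVec_mul, star_tiltedVec_dotProduct_mulVec hρ hρe]
  linear_combination (star φ ⬝ᵥ ρ *ᵥ φ) * hab'

lemma tiltedProj_mul_eq_zero (hS : S.IsHermitian) (hSφ : S *ᵥ φ = φ) (hσ : σ.IsHermitian)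
    (hσe : σ *ᵥ e = 0) (hSσ : S * σ = 0) : tiltedProj S e φ a b * σ = 0 := by
  have hσφ : σ *ᵥ φ = 0 := by
    rw [← hSφ, mulVec_mulVec, mul_eq_zero_symm hS hσ hSσ, zero_mulVec]
  have hσv : σ *ᵥ tiltedVec e φ a b = 0 := by
    rw [mulVec_tiltedVec, hσe, hσφ, smul_zero, smul_zero, add_zero]
  rw [tiltedProj, Matrix.add_mul, Matrix.sub_mul, hSσ, vecMulVec_star_mul_eq_zero hσ hσφ,
    vecMulVec_star_mul_eq_zero hσ hσv, sub_zero, add_zero]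

variable [DecidableEq n]

lemma jointProb_tiltedProj (hS : IsStarProjection S) (hSe : S *ᵥ e = 0) (hSφ : S *ᵥ φ = φ)
    (he : star e ⬝ᵥ e = 1) (hφ : star φ ⬝ᵥ φ = 1) (hab : a ^ 2 + b ^ 2 = 1)
    (hρ : ρ.IsHermitian) (hρe : ρ *ᵥ e = 0) (hSρ : S * ρ = ρ) :
    jointProb e (tiltedProj S e φ a b) (tiltedProj S e φ a b) ρ =
      (a ^ 2 * trace ρ + a ^ 2 * (1 - 2 * a ^ 2) * (star φ ⬝ᵥ ρ *ᵥ φ)).re := by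
  have hP := isStarProjection_tiltedProj hS hSe hSφ he hφ hab
  have hab' : (a : ℂ) ^ 2 + b ^ 2 = 1 := by exact_mod_cast hab
  have hPρP : star (tiltedProj S e φ a b *ᵥ e) ⬝ᵥ ρ *ᵥ tiltedProj S e φ a b *ᵥ e =
      a ^ 2 * b ^ 2 * (star φ ⬝ᵥ ρ *ᵥ φ) := by
    rw [tiltedProj_mulVec_left hS.isSelfAdjoint hSe hSφ he, mulVec_smul, star_smul,
      smul_dotProduct, dotProduct_smul, star_tiltedVec_dotProduct_mulVec hρ hρe]
    simp only [Complex.star_def, Complex.conj_ofReal, smul_eq_mul]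
    ring
  rw [jointProb_self hP.isSelfAdjoint,
    star_dotProduct_tiltedProj_mulVec hS.isSelfAdjoint hSe hSφ he,
    trace_tiltedProj_mul hρ hρe hSρ hab, hPρP]
  congr 1
  linear_combination a ^ 2 * (star φ ⬝ᵥ ρ *ᵥ φ) * hab'

end TiltedProjection

section Attack

variable {n : Type*} [Fintype n]

lemma posSemidef_of_isStarProjection {P : Matrix n n ℂ} (hP : IsStarProjection P) :
    P.PosSemidef := by
  open scoped MatrixOrder in exact nonneg_iff_posSemidef.1 hP.nonneg

lemma half_mul_sum_mul_one_add_div {K : Type*} [Fintype K] {p : K → ℝ} (hp : ∑ k, p k = 1)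
    (x : K → ℝ) :
    (1 / 2) * ∑ k, p k * (1 + x k / 8) = 1 / 2 + (∑ k, p k * x k) / 16 := by
  simp only [mul_add, mul_one, Finset.sum_add_distrib, hp, ← mul_div_assoc, ← Finset.sum_div]
  ring

variable [DecidableEq n]

lemma exists_isStarProjection_jointProb_add_eq {e : n → ℂ} {ρ σ : Matrix n n ℂ}
    (he : star e ⬝ᵥ e = 1) (hρ : ρ.IsHermitian) (hσ : σ.IsHermitian) (htrρ : trace ρ = 1)
    (htrσ : trace σ = 1) (hρe : ρ *ᵥ e = 0) (hσe : σ *ᵥ e = 0) (hρσ : ρ * σ = 0) :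
    ∃ P : Matrix n n ℂ, IsStarProjection P ∧
      jointProb e P P ρ + jointProb e (1 - P) (1 - P) σ = 1 + (⨆ i, hρ.eigenvalues i) / 8 := by
  have : Nonempty n := not_isEmpty_iff.1 fun _ => by simp at he
  set μ : ℝ := ⨆ i, hρ.eigenvalues i
  obtain ⟨φ, hφ, hρφ⟩ : ∃ φ : n → ℂ, star φ ⬝ᵥ φ = 1 ∧ ρ *ᵥ φ = (μ : ℂ) • φ :=
    exists_unit_eigenvector_iSup_eigenvalues hρ
  have hμ : (μ : ℂ) ≠ 0 := mod_cast (iSup_eigenvalues_pos hρ (by simp [htrρ])).ne'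
  have hS := isStarProjection_supportProj ρ
  have hSe := supportProj_mulVec_eq_zero hρ hρe
  have hSφ := supportProj_mulVec_eigenvector hρ hμ hρφ
  have hSσ := supportProj_mul_eq_zero hρ hρσ
  have hab : (1 / 2 : ℝ) ^ 2 + (√3 / 2) ^ 2 = 1 := by
    rw [div_pow √3, Real.sq_sqrt (by norm_num)]
    norm_num
  have hP := isStarProjection_tiltedProj hS hSe hSφ he hφ hab
  have hPσ := tiltedProj_mul_eq_zero (a := 1 / 2) (b := √3 / 2) hS.isSelfAdjoint hSφ hσ hσe hSσ
  refine ⟨tiltedProj (supportProj ρ) e φ (1 / 2) (√3 / 2), hP, ?_⟩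
  rw [jointProb_tiltedProj hS hSe hSφ he hφ hab hρ hρe (supportProj_mul_self hρ),
    jointProb_one_sub he hP.isSelfAdjoint hσ hσe hPσ,
    star_dotProduct_tiltedProj_mulVec hS.isSelfAdjoint hSe hSφ he, htrρ, htrσ, hρφ,
    dotProduct_smul, hφ, ← Complex.add_re, ← Complex.ofReal_re (1 + μ / 8)]
  congr 1
  push_cast
  simp only [smul_eq_mul]
  ring

lemma exists_isStarProjection_jointProb_add_eq_of_eq_or_eq {ι : Type*} {e : n → ℂ}
    (he : star e ⬝ᵥ e = 1) {ρ : ι → Matrix n n ℂ} (hρ : ∀ m, (ρ m).IsHermitian)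
    (htr : ∀ m, trace (ρ m) = 1) (hρe : ∀ m, ρ m *ᵥ e = 0)
    (horth : ∀ m m', m ≠ m' → ρ m * ρ m' = 0) {m₀ m₁ m : ι} (hne : m₁ ≠ m₀)
    (hm : m = m₀ ∨ m = m₁) :
    ∃ P : Matrix n n ℂ, IsStarProjection P ∧
      jointProb e P P (ρ m₀) + jointProb e (1 - P) (1 - P) (ρ m₁) =
        1 + (⨆ i, (hρ m).eigenvalues i) / 8 := by
  have hpair (m m') (h : m ≠ m') := exists_isStarProjection_jointProb_add_eq he (hρ m) (hρ m')
    (htr m) (htr m') (hρe m) (hρe m') (horth m m' h)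
  rcases hm with rfl | rfl
  · exact hpair m m₁ hne.symm
  · -- Exchanging `P` and `1 - P` exchanges the roles of the two messages.
    obtain ⟨P, hP, hval⟩ := hpair m m₀ hne
    exact ⟨1 - P, hP.one_sub, by rw [sub_sub_cancel, add_comm, hval]⟩

end Attack

end CloningAttack

open CloningAttack in
theorem cloning_indistinguishability_attack_general {n K ι : Type*} [Fintype n] [DecidableEq n]
    [Fintype K] [Finite ι] [Nontrivial ι] {e : n → ℂ} (he : star e ⬝ᵥ e = 1)
    {p : K → ℝ} (hpsum : ∑ k, p k = 1) {Enc : K → ι → Matrix n n ℂ}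
    (hEnc : ∀ k m, (Enc k m).IsHermitian) (htr : ∀ k m, trace (Enc k m) = 1)
    (hperp : ∀ k m, Enc k m *ᵥ e = 0) (horth : ∀ k m m', m ≠ m' → Enc k m * Enc k m' = 0)
    (m₀ : ι) :
    ∃ m₁, m₁ ≠ m₀ ∧ ∃ P Q : K → Fin 2 → Matrix n n ℂ,
      (∀ k b, (P k b).PosSemidef) ∧ (∀ k b, (Q k b).PosSemidef) ∧
      (∀ k, P k 0 + P k 1 = 1) ∧ (∀ k, Q k 0 + Q k 1 = 1) ∧
      (1 / 2) * ∑ k, p k * (jointProb e (P k 0) (Q k 0) (Enc k m₀) +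
          jointProb e (P k 1) (Q k 1) (Enc k m₁)) ≥
        1 / 2 + (⨆ m, ∑ k, p k * ⨆ i, (hEnc k m).eigenvalues i) / 16 := by
  obtain ⟨m, hmax⟩ := exists_eq_ciSup_of_finite
    (f := fun m => ∑ k, p k * ⨆ i, (hEnc k m).eigenvalues i)
  obtain ⟨m₁, hne, hm⟩ : ∃ m₁, m₁ ≠ m₀ ∧ (m = m₀ ∨ m = m₁) := by
    by_cases h : m = m₀
    · exact (exists_ne m₀).imp fun _ hne => ⟨hne, .inl h⟩
    · exact ⟨m, h, .inr rfl⟩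
  choose P hP hval using fun k => exists_isStarProjection_jointProb_add_eq_of_eq_or_eq he
    (hEnc k) (htr k) (hperp k) (horth k) hne hm
  have hpos (k) : ∀ b, (![P k, 1 - P k] b).PosSemidef := Fin.forall_fin_two.2
    ⟨posSemidef_of_isStarProjection (hP k), posSemidef_of_isStarProjection (hP k).one_sub⟩
  have hsum (k) : P k + (1 - P k) = 1 := add_sub_cancel _ _
  refine ⟨m₁, hne, fun k => ![P k, 1 - P k], fun k => ![P k, 1 - P k], hpos, hpos, hsum, hsum, ?_⟩
  simp only [cons_val_zero, cons_val_one, hval]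
  rw [half_mul_sum_mul_one_add_div hpsum, ← hmax]

/-- Corollary 1 of the paper: every correct QECM scheme admits a
cloning-indistinguishability attack (using the cloning channel `V`) with success
probability at least `1/2 + μ/16`, where `μ` is the maximum over messages of the
key-averaged largest eigenvalue of the ciphertext. -/
theorem cloning_indistinguishability_attack (d M : ℕ) (hd : 1 ≤ d) (hM : 2 ≤ M)
    (K : Type) [Fintype K] [Nonempty K]
    (p : K → ℝ) (hp : ∀ k, 0 ≤ p k) (hpsum : ∑ k, p k = 1)
    (Enc : K → Fin M → Matrix (Fin (d + 1)) (Fin (d + 1)) ℂ)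
    (hEnc : ∀ k m, (Enc k m).PosSemidef)
    (htr : ∀ k m, Matrix.trace (Enc k m) = 1)
    (hperp : ∀ k m, Enc k m *ᵥ perp d = 0)
    (horth : ∀ k (m m' : Fin M), m ≠ m' → Enc k m * Enc k m' = 0)
    (m₀ : Fin M) :
    ∃ m₁ : Fin M, m₁ ≠ m₀ ∧
    ∃ P Q : K → Fin 2 → Matrix (Fin (d + 1)) (Fin (d + 1)) ℂ,
      (∀ k b, (P k b).PosSemidef) ∧ (∀ k b, (Q k b).PosSemidef) ∧
      (∀ k, P k 0 + P k 1 = 1) ∧ (∀ k, Q k 0 + Q k 1 = 1) ∧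
      (1 / 2) * ∑ k, p k *
          ((Matrix.trace ((P k 0 ⊗ₖ Q k 0) * (cloneV d * Enc k m₀ * (cloneV d)ᴴ))).re +
           (Matrix.trace ((P k 1 ⊗ₖ Q k 1) * (cloneV d * Enc k m₁ * (cloneV d)ᴴ))).re) ≥
        1 / 2 + (⨆ m : Fin M, ∑ k, p k * ⨆ i, (hEnc k m).1.eigenvalues i) / 16 := by
  have : Nontrivial (Fin M) := Fin.nontrivial_iff_two_le.2 hM
  simp only [CloningAttack.cloneV_eq_cloningMap]
  exact cloning_indistinguishability_attack_general (CloningAttack.star_perp_dotProduct_perp d)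
    hpsum (fun k m => (hEnc k m).1) htr hperp horth m₀
end

section
/- Let d ≥ 1 and let M ≥ 2 be an even integer. Let K be a finite nonempty key set with probability weights p : K → ℝ (p k ≥ 0 and Σ_k p k = 1), and let Enc : K → Fin M → (d×d complex matrices) be such that every Enc k m is positive semidefinite with trace 1, and such that for every key k and all messages m ≠ m' one has (Enc k m)·(Enc k m') = 0 (which holds for every perfectly correct scheme). Then for every ε > 0 there exist: a dimension n ≥ 1; a finite family of Kraus operators A_j (j ∈ Fin r) of size (n·n)×d (complex matrices from ℂ^d to ℂ^n ⊗ ℂ^n) with Σ_j A_j† A_j = 1_d; and, for each key k, POVMs {P k m}_{m∈Fin M} and {Q k m}_{m∈Fin M} on ℂ^n (positive semidefinite n×n matrices with Σ_m P k m = 1 and Σ_m Q k m = 1), such that the winning probability of the corresponding cloning attack satisfies (1/M)·Σ_{m∈Fin M} Σ_{k∈K} p k · Σ_j Re tr((P k m ⊗ Q k m) · A_j · (Enc k m) · A_j†) ≥ ((1/2 − e⁻¹)/4) · ln(M/2) / d − ε. (In particular, the optimal cloning-attack winning probability for a uniformly distributed message is at least c·(log₂ M − 1)/d for an absolute constant c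 > 0.02285.) -/
open Matrix Kronecker
open scoped ComplexOrder

/-!
The attack measures the ciphertext with a rank-one POVM `|φ j⟩⟨φ j|`, sends the outcome to both
parties, and lets both guess the most likely message for their key. Its success probability is
`(1/M) ∑ j, guessValue (φ j)`, averaged over keys, where `guessValue x = max_m ⟨x, ρ_m x⟩`.
Integrating over a standard Gaussian `x` instead of summing over `j` also resolves a multiple of the
identity, and since everything in sight is 2-homogeneous, Carathéodory's theorem replaces the
Gaussian by finitely many vectors without changing either integral.

For a Gaussian `x`, the top eigenvectors `v m` of the mutually orthogonal states `ρ m` make the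
variables `⟨v m, x⟩` independent, and `guessValue x ≥ c m * |⟨v m, x⟩|²` with `c m` the top
eigenvalue. Orthogonality also forces `∑ m, 1 / c m ≤ d`, so at least half of the messages have
`c m ≥ M / (2 d)`, and the maximum of that many squared Gaussians is of order `log (M / 2)`.
-/

section ConvexHull

variable {V : Type*} [NormedAddCommGroup V] [NormedSpace ℝ V] [FiniteDimensional ℝ V]

theorem convexHull_eq_image_stdSimplex_prod_pi (s : Set V) :
    convexHull ℝ s =
      (fun q : (Fin (Module.finrank ℝ V + 1) → ℝ) × (Fin (Module.finrank ℝ V + 1) → V) =>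
        ∑ i, q.1 i • q.2 i) '' (stdSimplex ℝ _ ×ˢ Set.univ.pi fun _ => s) := by
  refine Set.Subset.antisymm (fun x hx => ?_) ?_
  · obtain ⟨ι, _, z, w, hz, hindep, hwpos, hwsum, hx⟩ := eq_pos_convex_span_of_mem_convexHull hx
    have hcard : Fintype.card ι ≤ Fintype.card (Fin (Module.finrank ℝ V + 1)) := by
      simpa using hindep.card_le_finrank_succ.trans (Nat.succ_le_succ (Submodule.finrank_le _))
    obtain ⟨e⟩ := Function.Embedding.nonempty_of_card_le hcard
    have : Nonempty ι := by
      by_contra hempty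
      simp [not_nonempty_iff.1 hempty] at hwsum
    have hinv : ∀ a, Function.invFun e (e a) = a := Function.leftInverse_invFun e.injective
    have hextend : ∀ i, i ∉ Set.range e → Function.extend e w 0 i = 0 := fun i hi =>
      Function.extend_apply' _ _ _ hi
    refine ⟨(Function.extend e w 0, z ∘ Function.invFun e), ⟨⟨fun i => ?_, ?_⟩, ?_⟩, ?_⟩
    · by_cases hi : i ∈ Set.range e
      · obtain ⟨a, rfl⟩ := hi
        simpa [e.injective.extend_apply] using (hwpos a).le
      · exact (hextend i hi).ge
    · rw [← hwsum, Fintype.sum_of_injective e e.injective w _ hextend]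
      simp [e.injective.extend_apply]
    · exact fun i _ => hz ⟨_, rfl⟩
    · rw [← hx]
      refine (Fintype.sum_of_injective e e.injective _ _ (fun i hi => ?_) fun a => ?_).symm
      · simp [hextend i hi]
      · simp [e.injective.extend_apply, hinv]
  · rintro _ ⟨q, ⟨⟨hnonneg, hsum⟩, hmem⟩, rfl⟩
    exact (convex_convexHull ℝ s).sum_mem (fun i _ => hnonneg i) hsum
      fun i _ => subset_convexHull ℝ s (hmem i (Set.mem_univ i))

theorem isCompact_convexHull {s : Set V} (hs : IsCompact s) : IsCompact (convexHull ℝ s) := by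
  rw [convexHull_eq_image_stdSimplex_prod_pi]
  exact ((isCompact_stdSimplex ℝ _).prod (isCompact_univ_pi fun _ => hs)).image (by fun_prop)

end ConvexHull

section QuadraticHomogeneity

open MeasureTheory

variable {E V : Type*} [NormedAddCommGroup E] [NormedSpace ℝ E] [NormedAddCommGroup V]
  [NormedSpace ℝ V] {F : E → V}

lemma eq_norm_sq_smul_of_homogeneous (hhom : ∀ (t : ℝ) x, 0 ≤ t → F (t • x) = t ^ 2 • F x)
    (x : E) : F x = ‖x‖ ^ 2 • F (‖x‖⁻¹ • x) := by
  rcases eq_or_ne x 0 with rfl | hx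
  · simpa using hhom 0 0 le_rfl
  · rw [← hhom _ _ (norm_nonneg x), smul_inv_smul₀ (norm_ne_zero_iff.2 hx)]

variable [MeasurableSpace E] [BorelSpace E] [FiniteDimensional ℝ E] {μ : Measure E}

lemma integrable_of_homogeneous (hF : Continuous F)
    (hhom : ∀ (t : ℝ) x, 0 ≤ t → F (t • x) = t ^ 2 • F x)
    (hμ : Integrable (fun x => ‖x‖ ^ 2) μ) : Integrable F μ := by
  have := FiniteDimensional.proper_real E
  obtain ⟨B, hB⟩ := (isCompact_closedBall (0 : E) 1).exists_bound_of_continuousOn hF.continuousOn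
  refine (hμ.const_mul B).mono' hF.aestronglyMeasurable (ae_of_all _ fun x => ?_)
  have hunit : ‖x‖⁻¹ • x ∈ Metric.closedBall (0 : E) 1 := by
    simpa [norm_smul] using inv_mul_le_one
  rw [eq_norm_sq_smul_of_homogeneous hhom x, norm_smul, norm_pow, norm_norm, mul_comm B]
  gcongr
  exact hB _ hunit

variable [FiniteDimensional ℝ V]

lemma integral_mem_smul_convexHull (hF : Continuous F)
    (hhom : ∀ (t : ℝ) x, 0 ≤ t → F (t • x) = t ^ 2 • F x)
    (hμ : Integrable (fun x => ‖x‖ ^ 2) μ) (hpos : 0 < ∫ x, ‖x‖ ^ 2 ∂μ) :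
    (∫ x, ‖x‖ ^ 2 ∂μ)⁻¹ • ∫ x, F x ∂μ ∈ convexHull ℝ (F '' Metric.sphere 0 1) := by
  have := FiniteDimensional.proper_real E
  have hclosed := (isCompact_convexHull ((isCompact_sphere (0 : E) 1).image hF)).isClosed
  by_contra hnotMem
  obtain ⟨l, u, hl, hu⟩ :=
    geometric_hahn_banach_closed_point (convex_convexHull ℝ _) hclosed hnotMem
  have hbound : ∀ x, l (F x) ≤ u * ‖x‖ ^ 2 := fun x => by
    rw [eq_norm_sq_smul_of_homogeneous hhom x, map_smul, smul_eq_mul, mul_comm]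
    rcases eq_or_ne x 0 with rfl | hx
    · simp
    have hunit : ‖x‖⁻¹ • x ∈ Metric.sphere (0 : E) 1 := by simp [norm_smul, hx]
    gcongr
    exact (hl _ (subset_convexHull ℝ _ ⟨_, hunit, rfl⟩)).le
  have hFint := integrable_of_homogeneous hF hhom hμ
  have hmono := integral_mono (l.integrable_comp hFint) (hμ.const_mul u) hbound
  rw [integral_const_mul, l.integral_comp_comm hFint] at hmono
  rw [map_smul, smul_eq_mul, lt_inv_mul_iff₀ hpos] at hu
  linarith

theorem exists_sum_eq_integral_of_homogeneous (hF : Continuous F)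
    (hhom : ∀ (t : ℝ) x, 0 ≤ t → F (t • x) = t ^ 2 • F x)
    (hμ : Integrable (fun x => ‖x‖ ^ 2) μ) :
    ∃ (r : ℕ) (x : Fin r → E), ∑ j, F (x j) = ∫ x, F x ∂μ := by
  rcases (integral_nonneg fun x => sq_nonneg ‖x‖ : 0 ≤ ∫ x, ‖x‖ ^ 2 ∂μ).eq_or_lt with hzero | hpos
  · have hnull : F =ᵐ[μ] 0 := by
      filter_upwards [(integral_eq_zero_iff_of_nonneg (fun x => sq_nonneg ‖x‖) hμ).1 hzero.symm]
        with x hx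
      rw [eq_norm_sq_smul_of_homogeneous hhom x, show ‖x‖ ^ 2 = 0 from hx, zero_smul, Pi.zero_apply]
    exact ⟨0, Fin.elim0, by simp [integral_congr_ae hnull]⟩
  set D := ∫ x, ‖x‖ ^ 2 ∂μ
  obtain ⟨ι, _, w, z, hw, -, hz, hsum⟩ := mem_convexHull_iff_exists_fintype.1
    (integral_mem_smul_convexHull hF hhom hμ hpos)
  choose y _ hy using hz
  have hscale : ∀ i, F (√(D * w i) • y i) = D • (w i • z i) := fun i => by
    rw [hhom _ _ (Real.sqrt_nonneg _), Real.sq_sqrt (mul_nonneg hpos.le (hw i)), hy, mul_smul]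
  let e := (Fintype.equivFin ι).symm
  refine ⟨Fintype.card ι, fun j => √(D * w (e j)) • y (e j), ?_⟩
  rw [e.sum_comp fun i => F (√(D * w i) • y i)]
  simp_rw [hscale]
  rw [← Finset.smul_sum, hsum, smul_inv_smul₀ hpos.ne']

end QuadraticHomogeneity

section Gaussian

open MeasureTheory ProbabilityTheory

lemma exp_div_three_le_gaussianPDFReal {x t : ℝ} (hx : |x| ≤ t) :
    Real.exp (-t ^ 2 / 2) / 3 ≤ gaussianPDFReal 0 1 x := by
  have hsqrt : √(2 * Real.pi) ≤ 3 := by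
    rw [Real.sqrt_le_left (by norm_num)]
    linarith [Real.pi_lt_four]
  have hsq : x ^ 2 ≤ t ^ 2 := sq_le_sq' (abs_le.1 hx).1 (abs_le.1 hx).2
  rw [gaussianPDFReal, div_eq_inv_mul, NNReal.coe_one, mul_one, mul_one, sub_zero]
  gcongr

lemma exp_div_three_le_gaussianReal_Ici {s : ℝ} (hs : 0 ≤ s) :
    Real.exp (-(s + 1) ^ 2 / 2) / 3 ≤ (gaussianReal 0 1).real (Set.Ici s) := by
  have hint := integrable_gaussianPDFReal 0 1
  calc Real.exp (-(s + 1) ^ 2 / 2) / 3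
      = ∫ _ in Set.Icc s (s + 1), Real.exp (-(s + 1) ^ 2 / 2) / 3 := by simp
    _ ≤ ∫ x in Set.Icc s (s + 1), gaussianPDFReal 0 1 x :=
        setIntegral_mono_on (by simp) hint.integrableOn measurableSet_Icc fun x hx =>
          exp_div_three_le_gaussianPDFReal (abs_le.2 ⟨by linarith [hx.1], hx.2⟩)
    _ ≤ ∫ x in Set.Ici s, gaussianPDFReal 0 1 x :=
        setIntegral_mono_set hint.integrableOn (ae_of_all _ (gaussianPDFReal_nonneg 0 1))
          Set.Icc_subset_Ici_self.eventuallyLE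
    _ = (gaussianReal 0 1).real (Set.Ici s) := by
        rw [Measure.real, gaussianReal_apply_eq_integral _ one_ne_zero,
          ENNReal.toReal_ofReal (integral_nonneg (gaussianPDFReal_nonneg 0 1))]

variable {Ω ι : Type*} {mΩ : MeasurableSpace Ω} {μ : Measure Ω} [IsProbabilityMeasure μ] [Fintype ι]

lemma measureReal_forall_notMem_le_exp {β : Type*} {mβ : MeasurableSpace β} {X : ι → Ω → β}
    (hX : iIndepFun X μ) (hmeas : ∀ i, AEMeasurable (X i) μ) {B : Set β} (hB : MeasurableSet B) :
    μ.real {ω | ∀ i, X i ω ∉ B} ≤ Real.exp (-∑ i, μ.real (X i ⁻¹' B)) := by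
  have hprod := hX.measure_inter_preimage_eq_mul Finset.univ (sets := fun _ => Bᶜ)
    fun _ _ => hB.compl
  have hset : {ω | ∀ i, X i ω ∉ B} = ⋂ i ∈ Finset.univ, X i ⁻¹' Bᶜ := by ext; simp
  calc μ.real {ω | ∀ i, X i ω ∉ B} = ∏ i, μ.real (X i ⁻¹' Bᶜ) := by
        rw [hset, Measure.real, hprod, ENNReal.toReal_prod]
        rfl
    _ ≤ ∏ i, Real.exp (-μ.real (X i ⁻¹' B)) := by
        refine Finset.prod_le_prod (fun _ _ => measureReal_nonneg) fun i _ => ?_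
        rw [Set.preimage_compl,
          probReal_compl_eq_one_sub₀ ((hmeas i).nullMeasurableSet_preimage hB)]
        exact Real.one_sub_le_exp_neg _
    _ = Real.exp (-∑ i, μ.real (X i ⁻¹' B)) := by
        rw [← Real.exp_sum, Finset.sum_neg_distrib]

lemma one_fourth_le_measureReal_exists_le {X : ι → Ω → ℝ} (hX : iIndepFun X μ)
    (hlaw : ∀ i, HasLaw (X i) (gaussianReal 0 1) μ) {s : ℝ} (hs : 0 ≤ s)
    (hcard : Real.exp ((s + 1) ^ 2 / 2) ≤ Fintype.card ι) :
    1 / 4 ≤ μ.real {ω | ∃ i, s ≤ X i ω} := by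
  have htail : ∀ i, Real.exp (-(s + 1) ^ 2 / 2) / 3 ≤ μ.real (X i ⁻¹' Set.Ici s) := fun i => by
    have h := exp_div_three_le_gaussianReal_Ici hs
    rwa [← (hlaw i).map_eq, map_measureReal_apply_of_aemeasurable (hlaw i).aemeasurable
      measurableSet_Ici] at h
  have hsum : 1 / 3 ≤ ∑ i, μ.real (X i ⁻¹' Set.Ici s) :=
    calc (1 / 3 : ℝ) = Real.exp ((s + 1) ^ 2 / 2) * (Real.exp (-(s + 1) ^ 2 / 2) / 3) := by
          rw [neg_div, mul_div_assoc', ← Real.exp_add, add_neg_cancel, Real.exp_zero]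
      _ ≤ Fintype.card ι * (Real.exp (-(s + 1) ^ 2 / 2) / 3) := by gcongr
      _ = ∑ _ : ι, Real.exp (-(s + 1) ^ 2 / 2) / 3 := by simp
      _ ≤ _ := Finset.sum_le_sum fun i _ => htail i
  have hnone : μ.real {ω | ∀ i, X i ω ∉ Set.Ici s} ≤ 3 / 4 :=
    calc _ ≤ Real.exp (-∑ i, μ.real (X i ⁻¹' Set.Ici s)) :=
          measureReal_forall_notMem_le_exp hX (fun i => (hlaw i).aemeasurable) measurableSet_Ici
      _ ≤ Real.exp (-(1 / 3)) := by gcongr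
      _ ≤ 3 / 4 := by
          rw [Real.exp_neg, inv_le_comm₀ (Real.exp_pos _) (by norm_num)]
          linarith [Real.add_one_le_exp (1 / 3 : ℝ)]
  have hcover : {ω | ∃ i, s ≤ X i ω} ∪ {ω | ∀ i, X i ω ∉ Set.Ici s} = Set.univ := by
    ext ω
    simpa using em (∃ i, s ≤ X i ω)
  have hunion := measureReal_union_le (μ := μ) {ω | ∃ i, s ≤ X i ω} {ω | ∀ i, X i ω ∉ Set.Ici s}
  rw [hcover, probReal_univ] at hunion
  linarith

theorem log_card_div_seven_le_integral_of_sq_le [Nonempty ι] {X : ι → Ω → ℝ} (hX : iIndepFun X μ)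
    (hlaw : ∀ i, HasLaw (X i) (gaussianReal 0 1) μ) {f : Ω → ℝ} (hf : Integrable f μ)
    (hle : ∀ i ω, X i ω ^ 2 ≤ f ω) :
    Real.log (Fintype.card ι) / 7 ≤ ∫ ω, f ω ∂μ := by
  obtain ⟨i⟩ := ‹Nonempty ι›
  rcases le_or_gt (Real.log (Fintype.card ι)) 7 with hsmall | hlarge
  · have hvar : ∫ ω, X i ω ^ 2 ∂μ = 1 := by
      have h := (hlaw i).variance_eq
      rwa [variance_of_integral_eq_zero (hlaw i).aemeasurable (by simp [(hlaw i).integral_eq]),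
        variance_id_gaussianReal, NNReal.coe_one] at h
    have hmono : ∫ ω, X i ω ^ 2 ∂μ ≤ ∫ ω, f ω ∂μ :=
      integral_mono_of_nonneg (ae_of_all _ fun _ => sq_nonneg _) hf (ae_of_all _ (hle i))
    linarith
  -- `√(2 log N)` is the typical size of the maximum of `N` independent standard Gaussians.
  set u := √(2 * Real.log (Fintype.card ι))
  have husq : u ^ 2 = 2 * Real.log (Fintype.card ι) := Real.sq_sqrt (by linarith)
  have hu : 3 ≤ u := Real.le_sqrt_of_sq_le (by linarith)
  have hcard : Real.exp ((u - 1 + 1) ^ 2 / 2) ≤ Fintype.card ι := by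
    rw [sub_add_cancel, husq, mul_div_cancel_left₀ _ two_ne_zero,
      Real.exp_log (Nat.cast_pos.2 (Fintype.card_pos_iff.2 ⟨i⟩))]
  have hprob := one_fourth_le_measureReal_exists_le hX hlaw (by linarith : 0 ≤ u - 1) hcard
  have hsub : {ω | ∃ i, u - 1 ≤ X i ω} ⊆ {ω | (u - 1) ^ 2 ≤ f ω} := fun ω ⟨j, hj⟩ =>
    (pow_le_pow_left₀ (by linarith) hj 2).trans (hle j ω)
  calc Real.log (Fintype.card ι) / 7 ≤ (u - 1) ^ 2 * (1 / 4) := by nlinarith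
    _ ≤ (u - 1) ^ 2 * μ.real {ω | (u - 1) ^ 2 ≤ f ω} := by
        gcongr
        exact hprob.trans (measureReal_mono hsub)
    _ ≤ ∫ ω, f ω ∂μ := mul_meas_ge_le_integral_of_nonneg
        (ae_of_all _ fun ω => (sq_nonneg _).trans (hle i ω)) hf _

end Gaussian

section StdGaussian

open MeasureTheory ProbabilityTheory

variable {E : Type*} [NormedAddCommGroup E] [InnerProductSpace ℝ E] [FiniteDimensional ℝ E]
  [MeasurableSpace E] [BorelSpace E]

lemma covariance_inner_stdGaussian (v w : E) :
    cov[fun x => inner ℝ v x, fun x => inner ℝ w x; stdGaussian E] = inner ℝ v w := by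
  rw [← covarianceBilin_apply_eq_cov IsGaussian.memLp_two_id, covarianceBilin_stdGaussian]
  rfl

lemma memLp_two_inner_stdGaussian (v : E) :
    MemLp (fun x => inner ℝ v x) 2 (stdGaussian E) :=
  IsGaussian.memLp_dual _ (innerSL ℝ v) 2 (by simp)

lemma integral_inner_stdGaussian (v : E) : ∫ x, inner ℝ v x ∂stdGaussian E = 0 :=
  integral_strongDual_stdGaussian (innerSL ℝ v)

lemma integral_inner_mul_inner_stdGaussian (v w : E) :
    ∫ x, inner ℝ v x * inner ℝ w x ∂stdGaussian E = inner ℝ v w := by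
  simpa [covariance, integral_inner_stdGaussian] using covariance_inner_stdGaussian v w

lemma hasLaw_inner_stdGaussian {v : E} (hv : ‖v‖ = 1) :
    HasLaw (fun x => inner ℝ v x) (gaussianReal 0 1) (stdGaussian E) where
  aemeasurable := by fun_prop
  map_eq := by
    have hvar : Var[fun x => inner ℝ v x; stdGaussian E] = 1 :=
      (variance_dual_stdGaussian (innerSL ℝ v)).trans (by simp [hv])
    have hmap := IsGaussian.map_eq_gaussianReal (μ := stdGaussian E) (innerSL ℝ v)
    simpa [hvar, integral_inner_stdGaussian] using hmap

lemma iIndepFun_inner_stdGaussian {ι : Type*} [Finite ι] {v : ι → E}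
    (hv : Pairwise fun i j => inner ℝ (v i) (v j) = 0) :
    iIndepFun (fun i x => inner ℝ (v i) x) (stdGaussian E) := by
  have : Fintype ι := Fintype.ofFinite ι
  have hlaw : HasGaussianLaw (fun x i => inner ℝ (v i) x) (stdGaussian E) :=
    IsGaussian.hasGaussianLaw_id.map (ContinuousLinearMap.pi fun i => innerSL ℝ (v i))
  exact hlaw.iIndepFun_of_covariance_eq_zero fun i j hij =>
    (covariance_inner_stdGaussian _ _).trans (hv hij)

lemma integrable_norm_sq_stdGaussian : Integrable (fun x => ‖x‖ ^ 2) (stdGaussian E) :=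
  IsGaussian.memLp_two_id.integrable_norm_pow two_ne_zero

end StdGaussian

section Frame

open MeasureTheory ProbabilityTheory

variable {n : Type*} [Fintype n]

lemma real_inner_eq_re_complex_inner (v x : EuclideanSpace ℂ n) :
    inner ℝ v x = (inner ℂ v x).re := by
  simp [PiLp.inner_apply]

lemma integral_apply_mul_star_apply_stdGaussian [DecidableEq n] (a b : n) :
    ∫ x, x a * star (x b) ∂stdGaussian (EuclideanSpace ℂ n) = 2 * (1 : Matrix n n ℂ) a b := by
  have hre : ∀ (x : EuclideanSpace ℂ n) a, (x a).re = inner ℝ (EuclideanSpace.single a 1) x :=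
    fun x a => by simp [real_inner_eq_re_complex_inner, EuclideanSpace.inner_single_left]
  have him : ∀ (x : EuclideanSpace ℂ n) a,
      (x a).im = inner ℝ (EuclideanSpace.single a Complex.I) x :=
    fun x a => by simp [real_inner_eq_re_complex_inner, EuclideanSpace.inner_single_left]
  have hprod : ∀ v w : EuclideanSpace ℂ n,
      Integrable (fun x => inner ℝ v x * inner ℝ w x) (stdGaussian _) := fun v w =>
    (memLp_two_inner_stdGaussian v).integrable_mul (memLp_two_inner_stdGaussian w)
  have hint : Integrable (fun x : EuclideanSpace ℂ n => x a * star (x b)) (stdGaussian _) :=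
    integrable_of_homogeneous (by fun_prop) (fun t x _ => by simp; ring)
      integrable_norm_sq_stdGaussian
  refine Complex.ext ((integral_re hint).symm.trans ?_) ((integral_im hint).symm.trans ?_)
  · simp only [Complex.star_def, RCLike.re_to_complex, Complex.mul_re, Complex.conj_re,
      Complex.conj_im, mul_neg, sub_neg_eq_add, hre, him]
    rw [integral_add (hprod _ _) (hprod _ _)]
    simp only [integral_inner_mul_inner_stdGaussian]
    by_cases hab : a = b <;>
      simp [real_inner_eq_re_complex_inner, EuclideanSpace.inner_single_left, one_apply, hab,
        one_add_one_eq_two]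
  · simp only [Complex.star_def, RCLike.im_to_complex, Complex.mul_im, Complex.conj_re,
      Complex.conj_im, mul_neg, neg_add_eq_sub, hre, him]
    rw [integral_sub (hprod _ _) (hprod _ _)]
    simp only [integral_inner_mul_inner_stdGaussian]
    by_cases hab : a = b <;>
      simp [real_inner_eq_re_complex_inner, EuclideanSpace.inner_single_left, one_apply, hab]

theorem exists_sum_vecMulVec_eq_one_and_sum_eq_integral [DecidableEq n]
    {g : EuclideanSpace ℂ n → ℝ}
    (hg : Continuous g) (hhom : ∀ (t : ℝ) x, 0 ≤ t → g (t • x) = t ^ 2 • g x) :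
    ∃ (r : ℕ) (φ : Fin r → EuclideanSpace ℂ n),
      ∑ j, vecMulVec (φ j).ofLp (star (φ j).ofLp) = 1 ∧
      ∑ j, g (φ j) = (∫ x, g x ∂stdGaussian (EuclideanSpace ℂ n)) / 2 := by
  -- The factor `1/2` is due to `E |x a|² = 2` for a complex coordinate of a real Gaussian vector.
  let F : EuclideanSpace ℂ n → (n × n → ℂ) × ℝ := fun x => (fun q => x q.1 * star (x q.2), g x)
  have hF : Continuous F := by fun_prop
  have hFhom : ∀ (t : ℝ) x, 0 ≤ t → F (t • x) = t ^ 2 • F x := fun t x ht =>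
    Prod.ext (funext fun q => by simp [F]; ring) (hhom t x ht)
  have hint := integrable_norm_sq_stdGaussian (E := EuclideanSpace ℂ n)
  have hFint := integrable_of_homogeneous hF hFhom hint
  obtain ⟨r, φ, hφ⟩ := exists_sum_eq_integral_of_homogeneous (μ := (2⁻¹ : NNReal) • stdGaussian _)
    hF hFhom hint.smul_measure_nnreal
  rw [integral_smul_nnreal_measure, NNReal.smul_def] at hφ
  refine ⟨r, φ, ?_, ?_⟩
  · ext a b
    have hentry := congrFun (congrArg Prod.fst hφ) (a, b)
    rw [Prod.fst_sum, Prod.smul_fst, fst_integral hFint, Pi.smul_apply,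
      eval_integral fun q => hFint.fst.eval q, integral_apply_mul_star_apply_stdGaussian] at hentry
    simpa [Matrix.sum_apply, vecMulVec_apply, F] using hentry
  · have hsnd := congrArg Prod.snd hφ
    rw [Prod.snd_sum, Prod.smul_snd, snd_integral hFint] at hsnd
    simpa [F, div_eq_inv_mul] using hsnd

end Frame

section Spectral

variable {n : Type*} [Fintype n]

lemma inner_eq_zero_of_mulVec_eq_smul {A B : Matrix n n ℂ} (hA : A.IsHermitian) (hAB : A * B = 0)
    {a b : ℂ} (ha : a ≠ 0) (hb : b ≠ 0) {v w : EuclideanSpace ℂ n}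
    (hv : A *ᵥ v.ofLp = a • v.ofLp) (hw : B *ᵥ w.ofLp = b • w.ofLp) :
    inner ℂ v w = 0 := by
  have hleft : star v.ofLp ᵥ* A = star a • star v.ofLp := by
    rw [← star_smul, ← hv, star_mulVec, hA.eq]
  have hzero : star a * b * (star v.ofLp ⬝ᵥ w.ofLp) = 0 := by
    calc star a * b * (star v.ofLp ⬝ᵥ w.ofLp) = star v.ofLp ᵥ* A ⬝ᵥ B *ᵥ w.ofLp := by
          rw [hleft, hw, smul_dotProduct, dotProduct_smul, smul_eq_mul, smul_eq_mul, mul_assoc]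
      _ = 0 := by rw [← dotProduct_mulVec, mulVec_mulVec, hAB, zero_mulVec, dotProduct_zero]
  rw [EuclideanSpace.inner_eq_star_dotProduct, dotProduct_comm]
  simpa [ha, hb] using hzero

lemma sum_trace_inv_smul_le_card {ι : Type*} [Fintype ι] {ρ : ι → Matrix n n ℂ}
    (hρ : ∀ m, (ρ m).IsHermitian) (horth : Pairwise fun m m' => ρ m * ρ m' = 0)
    {c : ι → ℝ} (hc : ∀ m, 0 < c m)
    (hpurity : ∀ m, (trace (ρ m * ρ m)).re ≤ c m * (trace (ρ m)).re) :
    ∑ m, (c m)⁻¹ * (trace (ρ m)).re ≤ Fintype.card n := by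
  classical
  -- `B` satisfies `tr B² ≤ tr B`, and `0 ≤ tr (B - 1)²` then gives `tr B ≤ tr 1`.
  set B := ∑ m, (c m)⁻¹ • ρ m
  have hB : B.IsHermitian := by
    simp only [B, IsHermitian, conjTranspose_sum, conjTranspose_smul, star_trivial, (hρ _).eq]
  have htrB : (trace B).re = ∑ m, (c m)⁻¹ * (trace (ρ m)).re := by
    simp [B, trace_sum, trace_smul]
  have hsq : B * B = ∑ m, ((c m)⁻¹ * (c m)⁻¹) • (ρ m * ρ m) := by
    simp only [B, Finset.sum_mul_sum, smul_mul_smul_comm]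
    refine Finset.sum_congr rfl fun m _ => Finset.sum_eq_single_of_mem m (Finset.mem_univ m) ?_
    intro m' _ hne
    rw [horth hne.symm, smul_zero]
  have htrsq : (trace (B * B)).re ≤ (trace B).re := by
    rw [hsq, htrB]
    simp only [trace_sum, trace_smul, Complex.re_sum, Complex.smul_re, smul_eq_mul]
    refine Finset.sum_le_sum fun m _ => ?_
    have := mul_le_mul_of_nonneg_left (hpurity m)
      (mul_pos (inv_pos.2 (hc m)) (inv_pos.2 (hc m))).le
    rwa [mul_assoc (c m)⁻¹ _ (c m * _), inv_mul_cancel_left₀ (hc m).ne'] at this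
  have hnonneg : 0 ≤ (trace ((B - 1) * (B - 1))).re := by
    have := (posSemidef_conjTranspose_mul_self (B - 1)).trace_nonneg
    rw [(hB.sub isHermitian_one).eq] at this
    exact (Complex.nonneg_iff.1 this).1
  have hexpand : trace ((B - 1) * (B - 1)) = trace (B * B) - 2 * trace B + Fintype.card n := by
    simp only [sub_mul, mul_sub, mul_one, one_mul, trace_sub, trace_one]
    ring
  rw [hexpand] at hnonneg
  simp only [Complex.add_re, Complex.sub_re, Complex.mul_re, Complex.re_ofNat, Complex.im_ofNat,
    zero_mul, sub_zero, Complex.natCast_re] at hnonneg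
  linarith

lemma trace_mul_self_eq_sum_eigenvalues_sq [DecidableEq n] {A : Matrix n n ℂ} (hA : A.IsHermitian) :
    trace (A * A) = ∑ i, (hA.eigenvalues i : ℂ) ^ 2 := by
  have hA' := hA.conjStarAlgAut_star_eigenvectorUnitary
  calc trace (A * A) = trace (diagonal (RCLike.ofReal ∘ hA.eigenvalues : n → ℂ) *
        diagonal (RCLike.ofReal ∘ hA.eigenvalues)) := by
        rw [← hA', ← map_mul, Unitary.conjStarAlgAut_star_apply, trace_mul_cycle,
          Unitary.mul_star_self_of_mem hA.eigenvectorUnitary.2, one_mul]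
    _ = ∑ i, (hA.eigenvalues i : ℂ) ^ 2 := by simp [trace_diagonal, sq]

lemma dotProduct_mulVec_eq_sum_eigenvalues [DecidableEq n] {A : Matrix n n ℂ} (hA : A.IsHermitian)
    (x : EuclideanSpace ℂ n) :
    (star x.ofLp ⬝ᵥ A *ᵥ x.ofLp).re =
      ∑ i, hA.eigenvalues i * ‖inner ℂ (hA.eigenvectorBasis i) x‖ ^ 2 := by
  set b := hA.eigenvectorBasis
  have heigen : ∀ i, inner ℂ (b i) (WithLp.toLp 2 (A *ᵥ x.ofLp)) =
      hA.eigenvalues i * inner ℂ (b i) x := fun i => by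
    have hleft : star (b i).ofLp ᵥ* A = hA.eigenvalues i • star (b i).ofLp := by
      conv_lhs => rw [← hA.eq, ← star_mulVec, hA.mulVec_eigenvectorBasis]
      simp [b]
    simp only [EuclideanSpace.inner_eq_star_dotProduct]
    rw [dotProduct_comm, dotProduct_mulVec, hleft, smul_dotProduct, dotProduct_comm,
      Complex.real_smul]
  calc (star x.ofLp ⬝ᵥ A *ᵥ x.ofLp).re = (inner ℂ x (WithLp.toLp 2 (A *ᵥ x.ofLp))).re := by
        rw [EuclideanSpace.inner_eq_star_dotProduct, dotProduct_comm]
    _ = (∑ i, inner ℂ x (b i) * inner ℂ (b i) (WithLp.toLp 2 (A *ᵥ x.ofLp))).re := by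
        rw [b.sum_inner_mul_inner]
    _ = ∑ i, hA.eigenvalues i * ‖inner ℂ (b i) x‖ ^ 2 := by
        rw [Complex.re_sum]
        refine Finset.sum_congr rfl fun i _ => ?_
        rw [heigen, mul_left_comm, Complex.re_ofReal_mul, ← inner_conj_symm x,
          Complex.conj_mul']
        norm_cast

lemma eigenvalue_mul_norm_inner_sq_le [DecidableEq n] {A : Matrix n n ℂ} (hA : A.PosSemidef) (i : n)
    (x : EuclideanSpace ℂ n) :
    hA.1.eigenvalues i * ‖inner ℂ (hA.1.eigenvectorBasis i) x‖ ^ 2 ≤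
      (star x.ofLp ⬝ᵥ A *ᵥ x.ofLp).re := by
  rw [dotProduct_mulVec_eq_sum_eigenvalues hA.1]
  exact Finset.single_le_sum
    (f := fun i => hA.1.eigenvalues i * ‖inner ℂ (hA.1.eigenvectorBasis i) x‖ ^ 2)
    (fun j _ => mul_nonneg (hA.eigenvalues_nonneg j) (sq_nonneg _)) (Finset.mem_univ i)

lemma exists_trace_mul_self_le_eigenvalue [DecidableEq n] {A : Matrix n n ℂ} (hA : A.PosSemidef)
    (htr : trace A = 1) :
    ∃ i, 0 < hA.1.eigenvalues i ∧ (trace (A * A)).re ≤ hA.1.eigenvalues i := by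
  have hsum : ∑ i, hA.1.eigenvalues i = 1 := by
    simpa [htr] using (congrArg Complex.re hA.1.trace_eq_sum_eigenvalues).symm
  have : Nonempty n := by
    by_contra hempty
    simp [not_nonempty_iff.1 hempty] at hsum
  obtain ⟨i, hi⟩ := Finite.exists_max hA.1.eigenvalues
  have hpos : 0 < hA.1.eigenvalues i := by
    by_contra! h
    linarith [Finset.sum_nonpos fun j (_ : j ∈ Finset.univ) => (hi j).trans h]
  refine ⟨i, hpos, ?_⟩
  calc (trace (A * A)).re = ∑ j, hA.1.eigenvalues j * hA.1.eigenvalues j := by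
        rw [trace_mul_self_eq_sum_eigenvalues_sq hA.1]
        simp [sq]
    _ ≤ ∑ j, hA.1.eigenvalues i * hA.1.eigenvalues j :=
        Finset.sum_le_sum fun j _ => mul_le_mul_of_nonneg_right (hi j) (hA.eigenvalues_nonneg j)
    _ = hA.1.eigenvalues i := by rw [← Finset.mul_sum, hsum, mul_one]

theorem exists_orthonormal_sum_inv_le_card {ι : Type*} [Fintype ι] {ρ : ι → Matrix n n ℂ}
    (hρ : ∀ m, (ρ m).PosSemidef) (htr : ∀ m, trace (ρ m) = 1)
    (horth : Pairwise fun m m' => ρ m * ρ m' = 0) :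
    ∃ (c : ι → ℝ) (v : ι → EuclideanSpace ℂ n), (∀ m, 0 < c m) ∧ Orthonormal ℂ v ∧
      ∑ m, (c m)⁻¹ ≤ Fintype.card n ∧
      ∀ m x, c m * ‖inner ℂ (v m) x‖ ^ 2 ≤ (star x.ofLp ⬝ᵥ ρ m *ᵥ x.ofLp).re := by
  classical
  choose i hpos hpurity using fun m => exists_trace_mul_self_le_eigenvalue (hρ m) (htr m)
  refine ⟨fun m => (hρ m).1.eigenvalues (i m), fun m => (hρ m).1.eigenvectorBasis (i m), hpos,
    ⟨fun m => (hρ m).1.eigenvectorBasis.norm_eq_one _, fun m m' hne => ?_⟩, ?_,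
    fun m => eigenvalue_mul_norm_inner_sq_le (hρ m) (i m)⟩
  · exact inner_eq_zero_of_mulVec_eq_smul (hρ m).1 (horth hne)
      (Complex.ofReal_ne_zero.2 (hpos m).ne') (Complex.ofReal_ne_zero.2 (hpos m').ne')
      ((hρ m).1.mulVec_eigenvectorBasis _) ((hρ m').1.mulVec_eigenvectorBasis _)
  · simpa [htr] using sum_trace_inv_smul_le_card (fun m => (hρ m).1) horth hpos
      (by simpa [htr] using hpurity)

end Spectral

section GuessValue

open MeasureTheory ProbabilityTheory

variable {n ι : Type*} [Fintype n]

/-- The score of the best guess of the message when a rank-one measurement of the ciphertext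
reports `x`: message `m` has (unnormalised) likelihood `⟨x, ρ m x⟩`. -/
noncomputable def guessValue (ρ : ι → Matrix n n ℂ) (x : EuclideanSpace ℂ n) : ℝ :=
  ⨆ m, (star x.ofLp ⬝ᵥ ρ m *ᵥ x.ofLp).re

lemma guessValue_smul (ρ : ι → Matrix n n ℂ) (t : ℝ) (x : EuclideanSpace ℂ n) :
    guessValue ρ (t • x) = t ^ 2 • guessValue ρ x := by
  simp only [guessValue, WithLp.ofLp_smul, star_smul, star_trivial, mulVec_smul, smul_dotProduct,
    dotProduct_smul, Complex.smul_re, smul_smul, smul_eq_mul, ← sq,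
    Real.mul_iSup_of_nonneg (sq_nonneg t)]

lemma le_guessValue [Finite ι] (ρ : ι → Matrix n n ℂ) (x : EuclideanSpace ℂ n) (m : ι) :
    (star x.ofLp ⬝ᵥ ρ m *ᵥ x.ofLp).re ≤ guessValue ρ x :=
  le_ciSup (f := fun m => (star x.ofLp ⬝ᵥ ρ m *ᵥ x.ofLp).re) (Set.finite_range _).bddAbove m

lemma exists_eq_guessValue [Finite ι] [Nonempty ι] (ρ : ι → Matrix n n ℂ)
    (x : EuclideanSpace ℂ n) : ∃ m, (star x.ofLp ⬝ᵥ ρ m *ᵥ x.ofLp).re = guessValue ρ x :=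
  exists_eq_ciSup_of_finite

lemma continuous_guessValue [Finite ι] [Nonempty ι] (ρ : ι → Matrix n n ℂ) :
    Continuous (guessValue ρ) := by
  have := Fintype.ofFinite ι
  unfold guessValue
  simp only [← Finset.sup'_univ_eq_ciSup, dotProduct, mulVec]
  exact Continuous.finset_sup'_apply _ fun m _ => by fun_prop

lemma integrable_guessValue [Finite ι] [Nonempty ι] (ρ : ι → Matrix n n ℂ) :
    Integrable (guessValue ρ) (stdGaussian (EuclideanSpace ℂ n)) :=
  integrable_of_homogeneous (continuous_guessValue ρ) (fun t x _ => guessValue_smul ρ t x)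
    integrable_norm_sq_stdGaussian

lemma card_le_two_mul_card_mul_le [Fintype ι] {a : ι → ℝ} (ha : ∀ i, 0 ≤ a i) {D : ℝ} (hD : 0 < D)
    (hsum : ∑ i, a i ≤ D) :
    (Fintype.card ι : ℝ) ≤ 2 * Fintype.card {i // Fintype.card ι * a i ≤ 2 * D} := by
  set N := (Fintype.card ι : ℝ)
  have hmarkov : ∀ i, 2 * D * (1 - if N * a i ≤ 2 * D then 1 else 0) ≤ N * a i := fun i => by
    split_ifs with h
    · simpa using mul_nonneg (Nat.cast_nonneg _) (ha i)
    · linarith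
  have hbound : 2 * D * (N - Fintype.card {i // N * a i ≤ 2 * D}) ≤ N * D :=
    calc _ = ∑ i, 2 * D * (1 - if N * a i ≤ 2 * D then 1 else 0) := by
          simp [← Finset.mul_sum, Fintype.card_subtype, N]
      _ ≤ ∑ i, N * a i := Finset.sum_le_sum fun i _ => hmarkov i
      _ ≤ N * D := by
          rw [← Finset.mul_sum]
          gcongr
  nlinarith

theorem card_div_mul_log_le_integral_guessValue [Fintype ι] [Nonempty ι]
    {ρ : ι → Matrix n n ℂ} (hρ : ∀ m, (ρ m).PosSemidef) (htr : ∀ m, trace (ρ m) = 1)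
    (horth : Pairwise fun m m' => ρ m * ρ m' = 0) :
    Fintype.card ι / (14 * Fintype.card n) * Real.log (Fintype.card ι / 2) ≤
      ∫ x, guessValue ρ x ∂stdGaussian (EuclideanSpace ℂ n) := by
  classical
  obtain ⟨c, v, hc, hv, hinv, hle⟩ := exists_orthonormal_sum_inv_le_card hρ htr horth
  set N := (Fintype.card ι : ℝ)
  set d := (Fintype.card n : ℝ)
  have hN : 0 < N := Nat.cast_pos.2 Fintype.card_pos
  have hd : 0 < d := hinv.trans_lt'
    (Finset.sum_pos (fun m _ => inv_pos.2 (hc m)) Finset.univ_nonempty)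
  let S := {m // N * (c m)⁻¹ ≤ 2 * d}
  have hS : N / 2 ≤ Fintype.card S := by
    rw [div_le_iff₀' two_pos]
    exact card_le_two_mul_card_mul_le (fun m => (inv_pos.2 (hc m)).le) hd hinv
  have hS_nonempty : Nonempty S :=
    Fintype.card_pos_iff.1 (Nat.cast_pos.1 ((half_pos hN).trans_le hS))
  have hsq : ∀ (m : S) x, inner ℝ (v m) x ^ 2 ≤ 2 * d / N * guessValue ρ x := fun m x => by
    have hscore := (hle m x).trans (le_guessValue ρ x m)
    calc inner ℝ (v m) x ^ 2 ≤ ‖inner ℂ (v m) x‖ ^ 2 := by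
          rw [real_inner_eq_re_complex_inner, ← sq_abs]
          gcongr
          exact Complex.abs_re_le_norm _
      _ ≤ (c m)⁻¹ * guessValue ρ x := by rwa [← div_eq_inv_mul, le_div_iff₀' (hc m)]
      _ ≤ 2 * d / N * guessValue ρ x := by
          gcongr
          · exact (mul_nonneg (hc m).le (sq_nonneg _)).trans hscore
          · rw [le_div_iff₀' hN]
            exact m.2
  have hlog := log_card_div_seven_le_integral_of_sq_le (ι := S)
    (iIndepFun_inner_stdGaussian fun m m' hne => by
      simp [real_inner_eq_re_complex_inner, hv.2 (Subtype.coe_ne_coe.2 hne)])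
    (fun m => hasLaw_inner_stdGaussian (hv.1 m)) ((integrable_guessValue ρ).const_mul _) hsq
  rw [integral_const_mul] at hlog
  calc N / (14 * d) * Real.log (N / 2) ≤ N / (14 * d) * Real.log (Fintype.card S) := by
        gcongr
    _ = N / (2 * d) * (Real.log (Fintype.card S) / 7) := by ring
    _ ≤ N / (2 * d) * (2 * d / N * ∫ x, guessValue ρ x ∂stdGaussian (EuclideanSpace ℂ n)) := by
        gcongr
    _ = _ := by field_simp

theorem card_div_mul_log_le_integral_sum_mul_guessValue {κ : Type*} [Fintype κ] [Fintype ι]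
    [Nonempty ι] {p : κ → ℝ} (hp : ∀ k, 0 ≤ p k) (hpsum : ∑ k, p k = 1)
    {ρ : κ → ι → Matrix n n ℂ} (hρ : ∀ k m, (ρ k m).PosSemidef) (htr : ∀ k m, trace (ρ k m) = 1)
    (horth : ∀ k, Pairwise fun m m' => ρ k m * ρ k m' = 0) :
    Fintype.card ι / (14 * Fintype.card n) * Real.log (Fintype.card ι / 2) ≤
      ∫ x, ∑ k, p k * guessValue (ρ k) x ∂stdGaussian (EuclideanSpace ℂ n) := by
  rw [integral_finsetSum _ fun k _ => (integrable_guessValue (ρ k)).const_mul (p k)]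
  simp only [integral_const_mul]
  set C := Fintype.card ι / (14 * Fintype.card n) * Real.log (Fintype.card ι / 2)
  calc C = ∑ k, p k * C := by rw [← Finset.sum_mul, hpsum, one_mul]
    _ ≤ _ := Finset.sum_le_sum fun k _ => mul_le_mul_of_nonneg_left
        (card_div_mul_log_le_integral_guessValue (hρ k) (htr k) (horth k)) (hp k)

end GuessValue

section BroadcastAttack

variable {n o ι : Type*} [DecidableEq o] [DecidableEq ι]

/-- Kraus operators of the channel that measures the ciphertext with the rank-one POVM
`|φ j⟩⟨φ j|` and sends the classical outcome `j` to both parties. -/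
def broadcastKraus (φ : o → n → ℂ) (j : o) : Matrix (o × o) n ℂ :=
  vecMulVec (Pi.single (j, j) 1) (star (φ j))

/-- The measurement of a party who reads off the classical outcome `j` and guesses `f j`. -/
def guessPOVM (f : o → ι) (m : ι) : Matrix o o ℂ :=
  diagonal fun j => if f j = m then 1 else 0

lemma posSemidef_guessPOVM (f : o → ι) (m : ι) : (guessPOVM f m).PosSemidef :=
  PosSemidef.diagonal fun j => by
    simp only [Pi.zero_apply]
    split_ifs <;> simp

lemma sum_guessPOVM [Fintype ι] (f : o → ι) : ∑ m, guessPOVM f m = 1 := by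
  ext i j
  by_cases hij : i = j <;> simp [guessPOVM, Matrix.sum_apply, one_apply, hij]

lemma sum_conjTranspose_mul_broadcastKraus [Fintype o] (φ : o → n → ℂ) :
    ∑ j, (broadcastKraus φ j)ᴴ * broadcastKraus φ j = ∑ j, vecMulVec (φ j) (star (φ j)) := by
  simp [broadcastKraus, conjTranspose_vecMulVec, vecMulVec_mul_vecMulVec]

variable [Fintype n]

lemma broadcastKraus_mul_mul_conjTranspose (φ : o → n → ℂ) (ρ : Matrix n n ℂ) (j : o) :
    broadcastKraus φ j * ρ * (broadcastKraus φ j)ᴴ =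
      (star (φ j) ⬝ᵥ ρ *ᵥ φ j) • vecMulVec (Pi.single (j, j) 1) (star (Pi.single (j, j) 1)) := by
  rw [broadcastKraus, conjTranspose_vecMulVec, vecMulVec_mul, vecMulVec_mul_vecMulVec,
    ← dotProduct_mulVec, star_star, vecMulVec_smul]

variable [Fintype o]

lemma trace_guessPOVM_mul_broadcastKraus (f : o → ι) (φ : o → n → ℂ) (ρ : Matrix n n ℂ) (m : ι)
    (j : o) :
    trace ((guessPOVM f m ⊗ₖ guessPOVM f m) *
      (broadcastKraus φ j * ρ * (broadcastKraus φ j)ᴴ)) =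
      if f j = m then star (φ j) ⬝ᵥ ρ *ᵥ φ j else 0 := by
  rw [broadcastKraus_mul_mul_conjTranspose, Matrix.mul_smul, trace_smul, mul_vecMulVec,
    trace_vecMulVec]
  by_cases h : f j = m <;> simp [guessPOVM, diagonal_kronecker_diagonal, h]

lemma sum_re_trace_guessPOVM_mul_broadcastKraus [Fintype ι] (f : o → ι) (φ : o → n → ℂ)
    (ρ : ι → Matrix n n ℂ) :
    ∑ m, ∑ j, (trace ((guessPOVM f m ⊗ₖ guessPOVM f m) *
      (broadcastKraus φ j * ρ m * (broadcastKraus φ j)ᴴ))).re =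
      ∑ j, (star (φ j) ⬝ᵥ ρ (f j) *ᵥ φ j).re := by
  rw [Finset.sum_comm]
  simp [trace_guessPOVM_mul_broadcastKraus, apply_ite Complex.re]

theorem sum_sum_mul_re_trace_guessPOVM_mul_broadcastKraus {κ : Type*} [Fintype κ] [Fintype ι]
    (p : κ → ℝ) (f : κ → o → ι) (φ : o → n → ℂ) (ρ : κ → ι → Matrix n n ℂ) :
    ∑ m, ∑ k, p k * ∑ j, (trace ((guessPOVM (f k) m ⊗ₖ guessPOVM (f k) m) *
      (broadcastKraus φ j * ρ k m * (broadcastKraus φ j)ᴴ))).re =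
      ∑ j, ∑ k, p k * (star (φ j) ⬝ᵥ ρ k (f k j) *ᵥ φ j).re := by
  rw [Finset.sum_comm]
  simp only [← Finset.mul_sum, sum_re_trace_guessPOVM_mul_broadcastKraus]
  simp only [Finset.mul_sum]
  exact Finset.sum_comm

end BroadcastAttack

theorem cloning_attack_uniform_lower_bound_general {n ι κ : Type*} [Fintype n] [DecidableEq n]
    [Fintype ι] [Nonempty ι] [Fintype κ] (p : κ → ℝ) (hp : ∀ k, 0 ≤ p k) (hpsum : ∑ k, p k = 1)
    (Enc : κ → ι → Matrix n n ℂ) (hEnc : ∀ k m, (Enc k m).PosSemidef)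
    (htr : ∀ k m, trace (Enc k m) = 1) (horth : ∀ k m m', m ≠ m' → Enc k m * Enc k m' = 0) :
    ∃ r : ℕ, 1 ≤ r ∧ ∃ (A : Fin r → Matrix (Fin r × Fin r) n ℂ)
      (P Q : κ → ι → Matrix (Fin r) (Fin r) ℂ),
      (∑ j, (A j)ᴴ * A j = 1) ∧
      (∀ k m, (P k m).PosSemidef) ∧ (∀ k m, (Q k m).PosSemidef) ∧
      (∀ k, ∑ m, P k m = 1) ∧ (∀ k, ∑ m, Q k m = 1) ∧
      1 / 28 * Real.log (Fintype.card ι / 2) / Fintype.card n ≤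
        (1 / Fintype.card ι) * ∑ m, ∑ k, p k * ∑ j,
          (trace ((P k m ⊗ₖ Q k m) * (A j * Enc k m * (A j)ᴴ))).re := by
  classical
  obtain ⟨r, φ, hframe, hφ⟩ := exists_sum_vecMulVec_eq_one_and_sum_eq_integral
    (g := fun x => ∑ k, p k * guessValue (Enc k) x)
    (by have := fun k => continuous_guessValue (Enc k); fun_prop)
    (fun t x _ => by simp [guessValue_smul, Finset.mul_sum, mul_left_comm])
  choose f hf using fun k j => exists_eq_guessValue (Enc k) (φ j)
  have hr : 1 ≤ r := by
    by_contra! hlt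
    obtain rfl : r = 0 := by lia
    obtain ⟨k⟩ : Nonempty κ := by
      by_contra hempty
      simp [not_nonempty_iff.1 hempty] at hpsum
    have htr' := htr k (Classical.arbitrary ι)
    rw [← mul_one (Enc k _), ← hframe] at htr'
    simp at htr'
  refine ⟨r, hr, broadcastKraus fun j => (φ j).ofLp, fun k => guessPOVM (f k),
    fun k => guessPOVM (f k), (sum_conjTranspose_mul_broadcastKraus _).trans hframe,
    fun k => posSemidef_guessPOVM (f k), fun k => posSemidef_guessPOVM (f k),
    fun k => sum_guessPOVM (f k), fun k => sum_guessPOVM (f k), ?_⟩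
  have hbound := card_div_mul_log_le_integral_sum_mul_guessValue hp hpsum hEnc htr
    fun k m m' => horth k m m'
  rw [sum_sum_mul_re_trace_guessPOVM_mul_broadcastKraus]
  simp only [hf]
  rw [hφ]
  calc 1 / 28 * Real.log (Fintype.card ι / 2) / Fintype.card n
      = 1 / Fintype.card ι *
          ((Fintype.card ι / (14 * Fintype.card n) * Real.log (Fintype.card ι / 2)) / 2) := by
        field_simp
        ring
    _ ≤ _ := by gcongr

/-- Theorem 2 of the paper: every correct QECM scheme with `M` messages (even `M ≥ 2`)
and `d`-dimensional ciphertexts admits a cloning attack winning with probability at least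
`((1/2 − e⁻¹)/4)·ln(M/2)/d − ε` for every `ε > 0`; i.e. the optimal winning probability
for uniformly distributed messages is at least `c·(log₂ M − 1)/d` with `c > 0.02285`. -/
theorem cloning_attack_uniform_lower_bound (d M : ℕ) (hd : 1 ≤ d) (hM : 2 ≤ M)
    (hMeven : Even M)
    (K : Type) [Fintype K] [Nonempty K]
    (p : K → ℝ) (hp : ∀ k, 0 ≤ p k) (hpsum : ∑ k, p k = 1)
    (Enc : K → Fin M → Matrix (Fin d) (Fin d) ℂ)
    (hEnc : ∀ k m, (Enc k m).PosSemidef)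
    (htr : ∀ k m, Matrix.trace (Enc k m) = 1)
    (horth : ∀ k (m m' : Fin M), m ≠ m' → Enc k m * Enc k m' = 0)
    (ε : ℝ) (hε : 0 < ε) :
    ∃ (n : ℕ), 1 ≤ n ∧
    ∃ (r : ℕ) (A : Fin r → Matrix (Fin n × Fin n) (Fin d) ℂ)
      (P Q : K → Fin M → Matrix (Fin n) (Fin n) ℂ),
      (∑ j, (A j)ᴴ * A j = 1) ∧
      (∀ k m, (P k m).PosSemidef) ∧ (∀ k m, (Q k m).PosSemidef) ∧
      (∀ k, ∑ m, P k m = 1) ∧ (∀ k, ∑ m, Q k m = 1) ∧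
      (1 / (M : ℝ)) * ∑ m, ∑ k, p k * ∑ j,
          (Matrix.trace ((P k m ⊗ₖ Q k m) * (A j * Enc k m * (A j)ᴴ))).re ≥
        ((1 / 2 - Real.exp (-1)) / 4) * Real.log ((M : ℝ) / 2) / (d : ℝ) - ε := by
  have : Nonempty (Fin M) := ⟨⟨0, by lia⟩⟩
  obtain ⟨n, hn, A, P, Q, hA, hP, hQ, hPsum, hQsum, hwin⟩ :=
    cloning_attack_uniform_lower_bound_general p hp hpsum Enc hEnc htr horth
  have hlog : 0 ≤ Real.log (M / 2) := Real.log_nonneg (by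
    rw [le_div_iff₀ two_pos]
    exact_mod_cast hM)
  have hconst : (1 / 2 - Real.exp (-1)) / 4 ≤ 1 / 28 := by linarith [Real.exp_neg_one_gt_d9]
  refine ⟨n, hn, n, A, P, Q, hA, hP, hQ, hPsum, hQsum, ?_⟩
  simp only [Fintype.card_fin] at hwin
  calc _ ≤ (1 / 2 - Real.exp (-1)) / 4 * Real.log (M / 2) / d := sub_le_self _ hε.le
    _ ≤ 1 / 28 * Real.log (M / 2) / d := by gcongr
    _ ≤ _ := hwin
end
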